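/- Let f be a cellular automaton on A^ℤ and let X ⊆ A^ℤ be a σ±-chain transitive subshift. Then the image f(X) is a σ±-chain transitive subshift. -/

import Mathlib

open Filter Set Function

namespace Gls

variable {A : Type*}

/-- The left shift map on `A^ℤ`. -/
def shift (x : ℤ → A) : ℤ → A := fun i => x (i + 1)

/-- A cellular automaton: a continuous shift-commuting self-map of the full shift. -/
def IsCA [TopologicalSpace A] (f : (ℤ → A) → (ℤ → A)) : Prop :=
  Continuous f ∧ f ∘ shift = shift ∘ f

/-- The set of limit points of the forward orbit of `x` under `f`. -/
def omegaSet [TopologicalSpace A] (f : (ℤ → A) → (ℤ → A)) (x : ℤ → A) : Set (ℤ → A) :=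
  {y | MapClusterPt y atTop fun t => f^[t] x}

/-- The realm of attraction of `Y`. -/
def realm [TopologicalSpace A] (f : (ℤ → A) → (ℤ → A)) (Y : Set (ℤ → A)) : Set (ℤ → A) :=
  {x | omegaSet f x ⊆ Y}

/-- The generic limit set: the intersection of all closed sets whose realm is comeager. -/
def genLimitSet [TopologicalSpace A] (f : (ℤ → A) → (ℤ → A)) : Set (ℤ → A) :=
  ⋂₀ {C | IsClosed C ∧ realm f C ∈ residual (ℤ → A)}

/-- The word `x_{[i, i+n)}` of length `n` read in the configuration `x` from position `i`. -/
def word (x : ℤ → A) (i : ℤ) (n : ℕ) : List A :=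
  (List.range n).map fun k => x (i + k)

/-- The cylinder set `[w]_i`. -/
def cylinder (w : List A) (i : ℤ) : Set (ℤ → A) := {x | word x i w.length = w}

/-- The language of `X`: all finite words occurring in points of `X`. -/
def lang (X : Set (ℤ → A)) : Set (List A) :=
  {w | ∃ x ∈ X, ∃ i : ℤ, word x i w.length = w}


/-- A subshift: a closed shift-invariant set. -/
def IsSubshift {A : Type*} [TopologicalSpace A] (X : Set (ℤ → A)) : Prop :=
  IsClosed X ∧ shift '' X = X

/-- The chain relation: `u ∼ v` iff they have the same length `n` and there are `x ∈ X`
and `k ≥ 0` with `x_{[0,n)} = u` and `x_{[k,k+n)} = v`. -/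
def chainRel {A : Type*} (X : Set (ℤ → A)) (u v : List A) : Prop :=
  u.length = v.length ∧ ∃ x ∈ X, ∃ k : ℕ,
    word x 0 u.length = u ∧ word x (k : ℤ) u.length = v

/-- `X` is `σ±`-chain transitive if for every `n`, the symmetric-transitive closure of the
width-`n` chain relation relates every pair of words in `L_n(X)`. -/
def ChainTransPM {A : Type*} (X : Set (ℤ → A)) : Prop :=
  ∀ u ∈ lang X, ∀ v ∈ lang X, u.length = v.length → Relation.EqvGen (chainRel X) u v

/-- `Y` is a `σ±`-chain component of `X`: a maximal `σ±`-chain transitive subshift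
contained in `X`. -/
def IsChainComponent {A : Type*} [TopologicalSpace A] (X Y : Set (ℤ → A)) : Prop :=
  IsSubshift Y ∧ Y ⊆ X ∧ ChainTransPM Y ∧
    ∀ Z : Set (ℤ → A), IsSubshift Z → Z ⊆ X → ChainTransPM Z → Y ⊆ Z → Z = Y

/-! By compactness of `X`, the symbol `f x 0` for `x ∈ X` depends only on the coordinates of `x` in
some window `[-r, r]`; as `f` commutes with the shift, `f` then acts on words, sending a word of
`X` of length `n` to a word of `f '' X` of length `n - 2 * r`. This action maps the two ends of a
link of the chain relation of `X` to the ends of a link in `f '' X`. Two words of `f '' X` of length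
`n` come from words of `X` of length `n + 2 * r`, and a chain joining the latter is mapped to a
chain joining the former. -/

open SymbolicDynamics.FullShift renaming
  shift → shiftBy, shift_apply → shiftBy_apply, shift_zero → shiftBy_zero
open scoped Topology

variable {B : Type*}

theorem eqvGen_map {α β : Type*} {r : α → α → Prop} {s : β → β → Prop} {F : α → β}
    (hF : ∀ a b, r a b → s (F a) (F b)) {a b : α} (hab : Relation.EqvGen r a b) :
    Relation.EqvGen s (F a) (F b) :=
  Quot.eqvGen_exact (congrArg (Quot.map F hF) (Quot.eqvGen_sound hab))

theorem exists_finset_forall_eqOn_imp_eq {ι β : Type*} {α : ι → Type*}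
    [∀ i, TopologicalSpace (α i)] [TopologicalSpace β] [DiscreteTopology β]
    {X : Set (∀ i, α i)} (hX : IsCompact X) {g : (∀ i, α i) → β} (hg : ContinuousOn g X) :
    ∃ I : Finset ι, ∀ x ∈ X, ∀ y ∈ X, (∀ i ∈ I, x i = y i) → g x = g y := by
  classical
  refine hX.induction_on (p := fun S => ∃ I : Finset ι, ∀ x ∈ S, ∀ y ∈ X,
    (∀ i ∈ I, x i = y i) → g x = g y) ⟨∅, by simp⟩ ?mono ?union ?nhds
  case mono => exact fun S T hST ⟨I, hI⟩ => ⟨I, fun x hx => hI x (hST hx)⟩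
  case union =>
    rintro S T ⟨I, hI⟩ ⟨J, hJ⟩
    refine ⟨I ∪ J, fun x hx y hy hxy => ?_⟩
    rcases hx with hx | hx
    · exact hI x hx y hy fun i hi => hxy i (Finset.mem_union_left J hi)
    · exact hJ x hx y hy fun i hi => hxy i (Finset.mem_union_right I hi)
  case nhds =>
    intro z hz
    have hconst : g ⁻¹' {g z} ∈ 𝓝[X] z := hg z hz (mem_nhds_discrete.2 rfl)
    obtain ⟨U, hU, hUX⟩ := mem_nhdsWithin_iff_exists_mem_nhds_inter.1 hconst
    rw [nhds_pi] at hU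
    obtain ⟨I, V, hV, hVU⟩ := Filter.mem_pi'.1 hU
    have hbox : (I : Set ι).pi V ∈ 𝓝 z := set_pi_mem_nhds I.finite_toSet fun i _ => hV i
    -- A point of `X` agreeing on `I` with a point of the box also lies in the box.
    refine ⟨X ∩ (I : Set ι).pi V, inter_mem_nhdsWithin X hbox, I, fun x hx y hy hxy => ?_⟩
    have hyV : y ∈ (I : Set ι).pi V := fun i hi => hxy i hi ▸ hx.2 i hi
    have hgx : g x = g z := hUX ⟨hVU hx.2, hx.1⟩
    have hgy : g y = g z := hUX ⟨hVU hyV, hy⟩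
    exact hgx.trans hgy.symm

theorem shift_injective : Injective (shift : (ℤ → A) → ℤ → A) := fun x y h => by
  funext i
  simpa [shift] using congrFun h (i - 1)

theorem shift_shiftBy (k : ℤ) (x : ℤ → A) : shift (shiftBy k x) = shiftBy (k + 1) x := by
  funext i
  exact congrArg x (by ring)

theorem mapsTo_shiftBy {X : Set (ℤ → A)} (hX : shift '' X = X) (k : ℤ) :
    MapsTo (shiftBy k) X X := by
  intro x hx
  induction k using Int.induction_on with
  | zero => rwa [shiftBy_zero]
  | succ k ih =>
    rw [← shift_shiftBy, ← hX]
    exact mem_image_of_mem shift ih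
  | pred k ih =>
    rwa [← shift_injective.mem_set_image, hX, shift_shiftBy, sub_add_cancel]

theorem map_shiftBy {f : (ℤ → A) → (ℤ → B)} {X : Set (ℤ → A)} (hX : shift '' X = X)
    (hf : EqOn (f ∘ shift) (shift ∘ f) X) (k : ℤ) {x : ℤ → A} (hx : x ∈ X) :
    f (shiftBy k x) = shiftBy k (f x) := by
  have hstep (k : ℤ) : f (shiftBy (k + 1) x) = shift (f (shiftBy k x)) := by
    rw [← shift_shiftBy]
    exact hf (mapsTo_shiftBy hX k hx)
  induction k using Int.induction_on with
  | zero => simp only [shiftBy_zero]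
  | succ k ih => rw [hstep, ih, shift_shiftBy]
  | pred k ih =>
    apply shift_injective
    rw [← hstep, shift_shiftBy, sub_add_cancel, ih]

theorem shift_image_image {f : (ℤ → A) → (ℤ → B)} {X : Set (ℤ → A)} (hX : shift '' X = X)
    (hf : EqOn (f ∘ shift) (shift ∘ f) X) : shift '' (f '' X) = f '' X := by
  rw [← image_comp, ← hf.image_eq, image_comp, hX]

-- In the definition of `word` the list `List.range n` is coerced to a list of integers.
theorem word_eq_ofFn (x : ℤ → A) (i : ℤ) (n : ℕ) :
    word x i n = List.ofFn fun k : Fin n => x (i + (k : ℕ)) := by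
  apply List.ext_getElem <;> simp [word, ← List.map_eq_flatMap]

@[simp]
theorem length_word (x : ℤ → A) (i : ℤ) (n : ℕ) : (word x i n).length = n := by
  simp [word_eq_ofFn]

theorem word_eq_word_iff {x y : ℤ → A} {i j : ℤ} {n : ℕ} :
    word x i n = word y j n ↔ ∀ k < n, x (i + k) = y (j + k) := by
  simp only [word_eq_ofFn, List.ofFn_inj, funext_iff, Fin.forall_iff]

theorem word_shiftBy (k : ℤ) (x : ℤ → A) (i : ℤ) (n : ℕ) :
    word (shiftBy k x) i n = word x (k + i) n :=
  word_eq_word_iff.2 fun m _ => congrArg x (add_assoc k i m).symm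

theorem word_mem_lang {X : Set (ℤ → A)} {x : ℤ → A} (hx : x ∈ X) (i : ℤ) (n : ℕ) :
    word x i n ∈ lang X :=
  ⟨x, hx, i, by rw [length_word]⟩

theorem chainRel_word {X : Set (ℤ → A)} (hX : shift '' X = X) {x : ℤ → A} (hx : x ∈ X)
    (i : ℤ) (k n : ℕ) : chainRel X (word x i n) (word x (i + k) n) := by
  refine ⟨by simp only [length_word], shiftBy i x, mapsTo_shiftBy hX i hx, k, ?_, ?_⟩
  · rw [length_word, word_shiftBy, add_zero]
  · rw [length_word, word_shiftBy]

/-- `f` is given on `X` by a local rule of radius `r`: the symbol of `f x` at a position is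
determined by the symbols of `x` at distance at most `r` from it, by the same rule everywhere. -/
def HasRadiusOn (f : (ℤ → A) → (ℤ → B)) (X : Set (ℤ → A)) (r : ℕ) : Prop :=
  ∀ x ∈ X, ∀ y ∈ X, ∀ i j : ℤ,
    (∀ k ∈ Icc (-r : ℤ) r, x (i + k) = y (j + k)) → f x i = f y j

/-- `F` is the action on words of a map `f` of radius `r` on `X`: a word of `x ∈ X` is sent to the
word of `f x` obtained by removing `r` positions at both ends. By truncated subtraction, words of
length less than `2 * r` are sent to the empty word. -/
def IsBlockMapOn (F : List A → List B) (f : (ℤ → A) → (ℤ → B)) (X : Set (ℤ → A)) (r : ℕ) :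
    Prop :=
  ∀ x ∈ X, ∀ (i : ℤ) (n : ℕ), F (word x i n) = word (f x) (i + r) (n - 2 * r)

section

variable {f : (ℤ → A) → (ℤ → B)} {X : Set (ℤ → A)}

-- The local rule of the Curtis–Hedlund–Lyndon theorem.
theorem exists_hasRadiusOn [TopologicalSpace A] [TopologicalSpace B] [DiscreteTopology B]
    (hXc : IsCompact X) (hX : shift '' X = X) (hf : ContinuousOn f X)
    (hfs : EqOn (f ∘ shift) (shift ∘ f) X) : ∃ r, HasRadiusOn f X r := by
  obtain ⟨I, hI⟩ := exists_finset_forall_eqOn_imp_eq hXc (continuousOn_pi.1 hf 0)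
  refine ⟨I.sup Int.natAbs, fun x hx y hy i j hxy => ?_⟩
  have hzero : f (shiftBy i x) 0 = f (shiftBy j y) 0 := by
    refine hI _ (mapsTo_shiftBy hX i hx) _ (mapsTo_shiftBy hX j hy) fun k hk => hxy k ?_
    have hk_le : k.natAbs ≤ I.sup Int.natAbs := Finset.le_sup hk
    exact mem_Icc.2 (by omega)
  simpa only [map_shiftBy hX hfs _ hx, map_shiftBy hX hfs _ hy, shiftBy_apply, add_zero]
    using hzero

theorem HasRadiusOn.word_eq_word {r : ℕ} (hf : HasRadiusOn f X r) {x y : ℤ → A} (hx : x ∈ X)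
    (hy : y ∈ X) {i j : ℤ} {n : ℕ} (hxy : word x i n = word y j n) :
    word (f x) (i + r) (n - 2 * r) = word (f y) (j + r) (n - 2 * r) := by
  refine word_eq_word_iff.2 fun m hm => hf x hx y hy _ _ fun k ⟨hk_ge, hk_le⟩ => ?_
  obtain ⟨l, hl⟩ : ∃ l : ℕ, (r + m + k : ℤ) = l := Int.eq_ofNat_of_zero_le (by omega)
  have hln : l < n := by omega
  simpa only [← hl, add_assoc] using word_eq_word_iff.1 hxy l hln

theorem HasRadiusOn.exists_isBlockMapOn {r : ℕ} (hf : HasRadiusOn f X r) :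
    ∃ F, IsBlockMapOn F f X r := by
  have hfactors : FactorsThrough
      (fun p : X × ℤ × ℕ => word (f p.1) (p.2.1 + r) (p.2.2 - 2 * r))
      (fun p => word (p.1 : ℤ → A) p.2.1 p.2.2) := by
    rintro ⟨x, i, n⟩ ⟨y, j, m⟩ hxy
    obtain rfl : n = m := by simpa only [length_word] using congrArg List.length hxy
    exact hf.word_eq_word x.2 y.2 hxy
  obtain ⟨F, hF⟩ := (factorsThrough_iff _).1 hfactors
  exact ⟨F, fun x hx i n => (congrFun hF (⟨x, hx⟩, i, n)).symm⟩

theorem IsBlockMapOn.chainRel_image {F : List A → List B} {r : ℕ} (hF : IsBlockMapOn F f X r)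
    (hfX : shift '' (f '' X) = f '' X) (u v : List A) (huv : chainRel X u v) :
    chainRel (f '' X) (F u) (F v) := by
  obtain ⟨-, x, hx, k, hu, hv⟩ := huv
  rw [← hv, ← hu, length_word, hF x hx, hF x hx, zero_add, add_comm (k : ℤ)]
  exact chainRel_word hfX (mem_image_of_mem f hx) r k _

theorem IsBlockMapOn.exists_mem_lang {F : List A → List B} {r : ℕ} (hF : IsBlockMapOn F f X r)
    {w : List B} (hw : w ∈ lang (f '' X)) :
    ∃ u ∈ lang X, u.length = w.length + 2 * r ∧ F u = w := by
  obtain ⟨_, ⟨x, hx, rfl⟩, i, hw⟩ := hw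
  refine ⟨word x (i - r) (w.length + 2 * r), word_mem_lang hx _ _, length_word _ _ _, ?_⟩
  rw [hF x hx, sub_add_cancel, Nat.add_sub_cancel, hw]

theorem ChainTransPM.image_of_isBlockMapOn {F : List A → List B} {r : ℕ} (hct : ChainTransPM X)
    (hF : IsBlockMapOn F f X r) (hfX : shift '' (f '' X) = f '' X) : ChainTransPM (f '' X) := by
  intro w hw w' hw' hlen
  obtain ⟨u, hu, hu_len, rfl⟩ := hF.exists_mem_lang hw
  obtain ⟨v, hv, hv_len, rfl⟩ := hF.exists_mem_lang hw'
  exact eqvGen_map (hF.chainRel_image hfX) (hct u hu v hv (by omega))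

end

theorem stmt16_general [TopologicalSpace A] [TopologicalSpace B] [DiscreteTopology B]
    {f : (ℤ → A) → (ℤ → B)} {X : Set (ℤ → A)} (hXc : IsCompact X) (hX : shift '' X = X)
    (hf : ContinuousOn f X) (hfs : EqOn (f ∘ shift) (shift ∘ f) X) (hct : ChainTransPM X) :
    IsSubshift (f '' X) ∧ ChainTransPM (f '' X) := by
  have hfX : shift '' (f '' X) = f '' X := shift_image_image hX hfs
  obtain ⟨r, hr⟩ := exists_hasRadiusOn hXc hX hf hfs
  obtain ⟨F, hF⟩ := hr.exists_isBlockMapOn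
  exact ⟨⟨(hXc.image_of_continuousOn hf).isClosed, hfX⟩, hct.image_of_isBlockMapOn hF hfX⟩

/-- the image of a `σ±`-chain transitive subshift under a cellular
automaton is a `σ±`-chain transitive subshift. -/
theorem stmt16 [Fintype A] [TopologicalSpace A] [DiscreteTopology A]
    (f : (ℤ → A) → (ℤ → A)) (hf : IsCA f) (X : Set (ℤ → A)) (hX : IsSubshift X)
    (hct : ChainTransPM X) :
    IsSubshift (f '' X) ∧ ChainTransPM (f '' X) := by
  exact stmt16_general hX.1.isCompact hX.2 hf.1.continuousOn (fun x _ => congrFun hf.2 x) hct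

end Gls
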